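/- arXiv:1804.01357 — 2 statements merged into one kernel-verified Lean document; each statement's English description precedes it below -/
import Mathlib

section
/- For every real number a, the function g : (0,∞) → ℝ defined by g(d) = e^{a/2} · Q(a/d + d/2) + e^{−a/2} · Q(d/2 − a/d) is strictly decreasing on (0,∞). -/
/-- The standard Gaussian tail function `Q(x) = ∫_x^∞ (1/√(2π)) e^{-t²/2} dt`. -/
noncomputable def Q (x : ℝ) : ℝ :=
  ∫ t in Set.Ioi x, (1 / Real.sqrt (2 * Real.pi)) * Real.exp (-t ^ 2 / 2)

/-!
Let `φ` be the standard Gaussian density, `p = a / d` and `q = d / 2`. Since `p * q = a / 2` does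
not depend on `d`, completing the square gives
`e^{a/2} φ(p + q) = φ(p) e^{-q²/2} = e^{-a/2} φ(q - p)`. The two terms of the risk therefore
have derivatives `-(p' + q') φ(p) e^{-q²/2}` and `-(q' - p') φ(p) e^{-q²/2}`: the contributions of
`p'` cancel, and the sum `-2 q' φ(p) e^{-q²/2}` is negative.
-/

open MeasureTheory ProbabilityTheory Set
open scoped NNReal

theorem hasDerivAt_integral_Ioi {E : Type*} [NormedAddCommGroup E] [NormedSpace ℝ E]
    [CompleteSpace E] {f : ℝ → E} {a x : ℝ} (hf : IntegrableOn f (Ioi a)) (hax : a < x)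
    (hfx : ContinuousAt f x) :
    HasDerivAt (fun u ↦ ∫ t in Ioi u, f t) (-f x) x := by
  have tail_eq : (fun u ↦ ∫ t in Ioi u, f t) =ᶠ[nhds x]
      fun u ↦ (∫ t in Ioi a, f t) - ∫ t in a..u, f t := by
    filter_upwards [Ioi_mem_nhds hax] with u hu
    rw [← intervalIntegral.integral_Ioi_sub_Ioi hf (mem_Ioi.1 hu).le, sub_sub_cancel]
  have intervalIntegrable_f : IntervalIntegrable f volume a x :=
    (intervalIntegrable_iff_integrableOn_Ioc_of_le hax.le).2 (hf.mono_set Ioc_subset_Ioi_self)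
  have ftc : HasDerivAt (fun u ↦ ∫ t in a..u, f t) (f x) x :=
    intervalIntegral.integral_hasDerivAt_right intervalIntegrable_f
      ⟨Ioi a, Ioi_mem_nhds hax, hf.aestronglyMeasurable⟩ hfx
  exact (ftc.const_sub _).congr_of_eventuallyEq tail_eq

theorem continuous_gaussianPDFReal (μ : ℝ) (v : ℝ≥0) : Continuous (gaussianPDFReal μ v) := by
  unfold gaussianPDFReal
  fun_prop

theorem gaussianPDFReal_zero_neg (v : ℝ≥0) (x : ℝ) :
    gaussianPDFReal 0 v (-x) = gaussianPDFReal 0 v x := by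
  simp only [gaussianPDFReal, sub_zero, neg_sq]

theorem exp_mul_gaussianPDFReal_add (μ : ℝ) (v : ℝ≥0) (x y : ℝ) :
    Real.exp ((x - μ) * y / v) * gaussianPDFReal μ v (x + y) =
      gaussianPDFReal μ v x * Real.exp (-y ^ 2 / (2 * v)) := by
  have complete_square : (x - μ) * y / v + -(x + y - μ) ^ 2 / (2 * v) =
      -(x - μ) ^ 2 / (2 * v) + -y ^ 2 / (2 * v) := by
    ring
  rw [gaussianPDFReal, gaussianPDFReal, mul_left_comm, ← Real.exp_add, complete_square,
    Real.exp_add, ← mul_assoc]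

theorem Q_eq_integral_gaussianPDFReal (x : ℝ) : Q x = ∫ t in Ioi x, gaussianPDFReal 0 1 t := by
  simp [Q, gaussianPDFReal]

theorem hasDerivAt_Q (x : ℝ) : HasDerivAt Q (-gaussianPDFReal 0 1 x) x := by
  rw [funext Q_eq_integral_gaussianPDFReal]
  exact hasDerivAt_integral_Ioi (integrable_gaussianPDFReal 0 1).integrableOn (sub_one_lt x)
    (continuous_gaussianPDFReal 0 1).continuousAt

section WeightedTails

variable {p q : ℝ → ℝ} {p' q' c x : ℝ}

theorem hasDerivAt_exp_mul_Q_add (hp : HasDerivAt p p' x) (hq : HasDerivAt q q' x)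
    (hc : p x * q x = c) :
    HasDerivAt (fun y ↦ Real.exp c * Q (p y + q y))
      (-(p' + q') * (gaussianPDFReal 0 1 (p x) * Real.exp (-q x ^ 2 / 2))) x := by
  have tilt : Real.exp c * gaussianPDFReal 0 1 (p x + q x) =
      gaussianPDFReal 0 1 (p x) * Real.exp (-q x ^ 2 / 2) := by
    simpa [hc] using exp_mul_gaussianPDFReal_add 0 1 (p x) (q x)
  refine (((hasDerivAt_Q (p x + q x)).comp x (hp.add hq)).const_mul (Real.exp c)).congr_deriv ?_
  linear_combination -(p' + q') * tilt

theorem hasDerivAt_exp_mul_Q_add_add_exp_neg_mul_Q_sub (hp : HasDerivAt p p' x)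
    (hq : HasDerivAt q q' x) (hc : p x * q x = c) :
    HasDerivAt (fun y ↦ Real.exp c * Q (p y + q y) + Real.exp (-c) * Q (q y - p y))
      (-(2 * q' * (gaussianPDFReal 0 1 (p x) * Real.exp (-q x ^ 2 / 2)))) x := by
  have deriv_add := hasDerivAt_exp_mul_Q_add hp hq hc
  have deriv_sub : HasDerivAt (fun y ↦ Real.exp (-c) * Q (q y - p y))
      (-(-p' + q') * (gaussianPDFReal 0 1 (p x) * Real.exp (-q x ^ 2 / 2))) x := by
    have neg_mul_eq : (-p) x * q x = -c := by rw [Pi.neg_apply, neg_mul, hc]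
    simpa only [Pi.neg_apply, gaussianPDFReal_zero_neg, neg_add_eq_sub] using
      hasDerivAt_exp_mul_Q_add hp.neg hq neg_mul_eq
  exact (deriv_add.add deriv_sub).congr_deriv (by ring)

end WeightedTails

/-- For every real `a`, the team Bayes risk
`g(d) = e^{a/2} Q(a/d + d/2) + e^{-a/2} Q(d/2 - a/d)` is strictly decreasing on `(0, ∞)`. -/
theorem stmt_5 (a : ℝ) :
    StrictAntiOn
      (fun d : ℝ =>
        Real.exp (a / 2) * Q (a / d + d / 2) + Real.exp (-(a / 2)) * Q (d / 2 - a / d))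
      (Set.Ioi 0) := by
  have hasDerivAt_risk (d : ℝ) (hd : 0 < d) :=
    hasDerivAt_exp_mul_Q_add_add_exp_neg_mul_Q_sub (c := a / 2)
      ((hasDerivAt_const d a).fun_div (hasDerivAt_id' d) hd.ne') ((hasDerivAt_id' d).div_const 2)
      (by field_simp)
  refine strictAntiOn_of_deriv_neg (convex_Ioi 0)
    (fun d hd ↦ (hasDerivAt_risk d hd).continuousAt.continuousWithinAt) fun d hd ↦ ?_
  rw [interior_Ioi] at hd
  rw [(hasDerivAt_risk d hd).deriv, neg_lt_zero]
  have density_pos := gaussianPDFReal_pos 0 1 (a / d) one_ne_zero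
  positivity
end

section
/- Suppose σ > 0, 0 < P_0 < P_1, π_0^t, π_0^r ∈ (0,1), the receiver costs satisfy C_{10}^r > C_{00}^r and C_{01}^r > C_{11}^r, and the transmitter costs satisfy C_{10}^t > C_{00}^t and C_{01}^t < C_{11}^t (i.e., ξ_0 > 0 and ξ_1 < 0). Then the binary Gaussian signaling game has no informative Nash equilibrium: there is no Nash equilibrium ((S_0*, S_1*), Γ_1*) with S_0* ≠ S_1*. -/
/-- Gaussian density with standard deviation `σ` (centered at 0). -/
noncomputable def gauss (σ y : ℝ) : ℝ :=
  (1 / (σ * Real.sqrt (2 * Real.pi))) * Real.exp (-y ^ 2 / (2 * σ ^ 2))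

/-- Bayes risk of a player with prior `π₀` (and `π₁ = 1 - π₀`) and costs `Cⱼᵢ`
(cost of deciding `Hⱼ` when `Hᵢ` is true), when the signal levels are `S₀, S₁` and
the receiver decides `H₁` iff the observation lies in `Γ₁`. -/
noncomputable def bayesRisk (σ S0 S1 π0 C00 C01 C10 C11 : ℝ) (Γ1 : Set ℝ) : ℝ :=
  π0 * (C00 * (∫ y in Γ1ᶜ, gauss σ (y - S0)) + C10 * (∫ y in Γ1, gauss σ (y - S0)))
    + (1 - π0) * (C01 * (∫ y in Γ1ᶜ, gauss σ (y - S1)) + C11 * (∫ y in Γ1, gauss σ (y - S1)))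

/-!
Only the probabilities `pᵢ = ∫ y in Γ₁, gauss σ (y - Sᵢ)` matter. Since `C₀₁ᵗ < C₁₁ᵗ`, the
transmitter wants `p₁` small; as `S₀` is also an admissible value for `S₁`, equilibrium forces
`p₁ ≤ p₀`. The receiver, however, maximizes `b * p₁ - a * p₀` for some `a, b > 0`. If `S₀ ≠ S₁`,
the likelihood ratio takes every positive value, so `b * gauss σ (y - S₁) - a * gauss σ (y - S₀)`
changes sign and the optimal decision region does strictly better than both `∅` and `ℝ`, that is,
`b * p₁ - a * p₀ > max 0 (b - a)`. With `p₁ ≤ p₀` the left side would be at most `(b - a) * p₀`,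
which never exceeds `max 0 (b - a)`.
-/

open MeasureTheory
open ProbabilityTheory (gaussianPDFReal integrable_gaussianPDFReal integral_gaussianPDFReal_eq_one)

lemma lt_of_max_zero_lt_mul_sub_mul {a b p q t : ℝ} (hb : 0 ≤ b) (hp : 0 ≤ p) (hpt : p ≤ t)
    (h : max 0 ((b - a) * t) < b * q - a * p) : p < q := by
  by_contra! hqp
  refine h.not_ge ?_
  calc b * q - a * p
    _ ≤ (b - a) * p := by linarith [mul_le_mul_of_nonneg_left hqp hb]
    _ ≤ max 0 ((b - a) * t) := by
      rcases le_total a b with hab | hba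
      · exact le_max_of_le_right (mul_le_mul_of_nonneg_left hpt (sub_nonneg.mpr hab))
      · exact le_max_of_le_left (mul_nonpos_of_nonpos_of_nonneg (sub_nonpos.mpr hba) hp)

section OptimalRegion

variable {X : Type*} [TopologicalSpace X] [MeasurableSpace X] [OpensMeasurableSpace X]
  {μ : Measure X} {f g : X → ℝ}

lemma setIntegral_setOf_pos_eq_integral_max_zero (hf : Continuous f) :
    ∫ x in {x | 0 < f x}, f x ∂μ = ∫ x, max (f x) 0 ∂μ := by
  rw [← integral_indicator (isOpen_lt continuous_const hf).measurableSet]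
  refine integral_congr_ae (.of_forall fun x => ?_)
  by_cases hx : 0 < f x
  · simp [hx, hx.le]
  · simp [hx, not_lt.mp hx]

variable [μ.IsOpenPosMeasure]

lemma max_zero_integral_lt_setIntegral_setOf_pos (hf : Continuous f) (hf_int : Integrable f μ)
    (h_pos : ∃ x, 0 < f x) (h_neg : ∃ x, f x < 0) :
    max 0 (∫ x, f x ∂μ) < ∫ x in {x | 0 < f x}, f x ∂μ := by
  obtain ⟨x, hx⟩ := h_pos
  obtain ⟨z, hz⟩ := h_neg
  rw [setIntegral_setOf_pos_eq_integral_max_zero hf, max_lt_iff]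
  constructor
  · exact integral_pos_of_integrable_nonneg_nonzero (x := x) (by fun_prop) hf_int.pos_part
      (fun _ => le_max_right _ _) (lt_max_of_lt_left hx).ne'
  · rw [← sub_pos, ← integral_sub hf_int.pos_part hf_int]
    exact integral_pos_of_integrable_nonneg_nonzero (x := z) (by fun_prop)
      (hf_int.pos_part.sub hf_int) (fun _ => sub_nonneg.mpr (le_max_left _ _))
      (sub_pos.mpr (lt_max_of_lt_right hz)).ne'

lemma setIntegral_lt_setIntegral_of_forall_weighted_sub_le {a b : ℝ} {Γ : Set X}
    (hf : Continuous f) (hf_int : Integrable f μ) (hf_nonneg : 0 ≤ f)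
    (hg : Continuous g) (hg_int : Integrable g μ) (hfg : ∫ x, f x ∂μ = ∫ x, g x ∂μ) (hb : 0 ≤ b)
    (h_lt : ∃ x, a * f x < b * g x) (h_gt : ∃ x, b * g x < a * f x)
    (h_opt : ∀ Δ, MeasurableSet Δ → b * ∫ x in Δ, g x ∂μ - a * ∫ x in Δ, f x ∂μ ≤
      b * ∫ x in Γ, g x ∂μ - a * ∫ x in Γ, f x ∂μ) :
    ∫ x in Γ, f x ∂μ < ∫ x in Γ, g x ∂μ := by
  let h : X → ℝ := fun x => b * g x - a * f x
  have h_cont : Continuous h := by fun_prop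
  have h_setIntegral (Δ : Set X) :
      ∫ x in Δ, h x ∂μ = b * ∫ x in Δ, g x ∂μ - a * ∫ x in Δ, f x ∂μ := by
    rw [integral_sub (hg_int.const_mul b).integrableOn (hf_int.const_mul a).integrableOn,
      integral_const_mul, integral_const_mul]
  have h_integral : ∫ x, h x ∂μ = (b - a) * ∫ x, f x ∂μ := by
    rw [← setIntegral_univ, h_setIntegral, setIntegral_univ, setIntegral_univ, hfg, sub_mul]
  have h_strict : max 0 ((b - a) * ∫ x, f x ∂μ) <
      b * ∫ x in Γ, g x ∂μ - a * ∫ x in Γ, f x ∂μ :=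
    calc max 0 ((b - a) * ∫ x, f x ∂μ)
      _ < ∫ x in {x | 0 < h x}, h x ∂μ := by
        rw [← h_integral]
        exact max_zero_integral_lt_setIntegral_setOf_pos h_cont
          ((hg_int.const_mul b).sub (hf_int.const_mul a)) (h_lt.imp fun _ => sub_pos.mpr)
          (h_gt.imp fun _ => sub_neg.mpr)
      _ ≤ _ := by
        rw [h_setIntegral]
        exact h_opt _ (isOpen_lt continuous_const h_cont).measurableSet
  exact lt_of_max_zero_lt_mul_sub_mul hb (integral_nonneg hf_nonneg)
    (setIntegral_le_integral hf_int (.of_forall hf_nonneg)) h_strict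

end OptimalRegion

section Gauss

variable {σ : ℝ}

lemma continuous_gauss (σ : ℝ) : Continuous (gauss σ) := by
  unfold gauss
  fun_prop

lemma gauss_pos (hσ : 0 < σ) (y : ℝ) : 0 < gauss σ y := by
  unfold gauss
  positivity

lemma gauss_sub_eq_gaussianPDFReal (hσ : 0 ≤ σ) (S : ℝ) :
    (fun y => gauss σ (y - S)) = gaussianPDFReal S (σ.toNNReal ^ 2) := by
  ext y
  have sqrt_variance : √(2 * Real.pi * σ ^ 2) = σ * √(2 * Real.pi) := by
    rw [Real.sqrt_mul (by positivity), Real.sqrt_sq hσ, mul_comm]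
  rw [gauss, gaussianPDFReal, NNReal.coe_pow, Real.coe_toNNReal σ hσ, sqrt_variance, one_div]

lemma integrable_gauss_sub (hσ : 0 ≤ σ) (S : ℝ) : Integrable fun y => gauss σ (y - S) := by
  rw [gauss_sub_eq_gaussianPDFReal hσ]
  exact integrable_gaussianPDFReal S _

lemma integral_gauss_sub (hσ : 0 < σ) (S : ℝ) : ∫ y, gauss σ (y - S) = 1 := by
  rw [gauss_sub_eq_gaussianPDFReal hσ.le]
  exact integral_gaussianPDFReal_eq_one S (pow_ne_zero 2 (Real.toNNReal_pos.mpr hσ).ne')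

lemma setIntegral_compl_gauss_sub (hσ : 0 < σ) (S : ℝ) {Γ : Set ℝ} (hΓ : MeasurableSet Γ) :
    ∫ y in Γᶜ, gauss σ (y - S) = 1 - ∫ y in Γ, gauss σ (y - S) := by
  rw [setIntegral_compl hΓ (integrable_gauss_sub hσ.le S), integral_gauss_sub hσ]

lemma exists_gauss_sub_eq_mul_gauss_sub (hσ : σ ≠ 0) {S0 S1 c : ℝ} (hS : S0 ≠ S1) (hc : 0 < c) :
    ∃ y, gauss σ (y - S1) = c * gauss σ (y - S0) := by
  have hd : S1 - S0 ≠ 0 := sub_ne_zero.mpr hS.symm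
  -- The log-likelihood ratio is affine in `y` with slope `(S1 - S0) / σ ^ 2`.
  refine ⟨(Real.log c * (2 * σ ^ 2) + S1 ^ 2 - S0 ^ 2) / (2 * (S1 - S0)), ?_⟩
  nth_rw 2 [← Real.exp_log hc]
  rw [gauss, gauss, mul_left_comm (Real.exp _), ← Real.exp_add]
  congr 2
  field_simp
  ring

lemma exists_mul_gauss_sub_lt_mul_gauss_sub (hσ : 0 < σ) {S0 S1 a b : ℝ} (hS : S0 ≠ S1)
    (ha : 0 < a) (hb : 0 < b) : ∃ y, a * gauss σ (y - S0) < b * gauss σ (y - S1) := by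
  obtain ⟨y, hy⟩ :=
    exists_gauss_sub_eq_mul_gauss_sub hσ.ne' hS (c := 2 * a / b) (by positivity)
  refine ⟨y, ?_⟩
  calc a * gauss σ (y - S0)
    _ < 2 * (a * gauss σ (y - S0)) := by linarith [mul_pos ha (gauss_pos hσ (y - S0))]
    _ = b * gauss σ (y - S1) := by rw [hy]; field_simp

end Gauss

section BayesRisk

variable {σ S0 S1 π0 C00 C01 C10 C11 : ℝ} {Γ : Set ℝ}

lemma bayesRisk_eq_sub (hσ : 0 < σ) (hΓ : MeasurableSet Γ) :
    bayesRisk σ S0 S1 π0 C00 C01 C10 C11 Γ = π0 * C00 + (1 - π0) * C01 -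
      ((1 - π0) * (C01 - C11) * (∫ y in Γ, gauss σ (y - S1)) -
        π0 * (C10 - C00) * ∫ y in Γ, gauss σ (y - S0)) := by
  rw [bayesRisk, setIntegral_compl_gauss_sub hσ S0 hΓ, setIntegral_compl_gauss_sub hσ S1 hΓ]
  ring

lemma setIntegral_gauss_sub_le_of_bayesRisk_le {S1' : ℝ} (hσ : 0 < σ) (hπ : π0 < 1)
    (hC : C01 < C11) (hΓ : MeasurableSet Γ)
    (h : bayesRisk σ S0 S1 π0 C00 C01 C10 C11 Γ ≤ bayesRisk σ S0 S1' π0 C00 C01 C10 C11 Γ) :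
    ∫ y in Γ, gauss σ (y - S1) ≤ ∫ y in Γ, gauss σ (y - S1') := by
  rw [bayesRisk_eq_sub hσ hΓ, bayesRisk_eq_sub hσ hΓ] at h
  have weight_pos : 0 < (1 - π0) * (C11 - C01) := mul_pos (sub_pos.mpr hπ) (sub_pos.mpr hC)
  exact le_of_mul_le_mul_left (by linarith) weight_pos

lemma setIntegral_gauss_sub_lt_of_forall_bayesRisk_le (hσ : 0 < σ) (hπ : π0 ∈ Set.Ioo (0 : ℝ) 1)
    (hC0 : C00 < C10) (hC1 : C11 < C01) (hS : S0 ≠ S1) (hΓ : MeasurableSet Γ)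
    (h_opt : ∀ Δ, MeasurableSet Δ → bayesRisk σ S0 S1 π0 C00 C01 C10 C11 Γ ≤
      bayesRisk σ S0 S1 π0 C00 C01 C10 C11 Δ) :
    ∫ y in Γ, gauss σ (y - S0) < ∫ y in Γ, gauss σ (y - S1) := by
  have weight0_pos : 0 < π0 * (C10 - C00) := mul_pos hπ.1 (sub_pos.mpr hC0)
  have weight1_pos : 0 < (1 - π0) * (C01 - C11) := mul_pos (sub_pos.mpr hπ.2) (sub_pos.mpr hC1)
  have continuous_shift (S : ℝ) : Continuous fun y => gauss σ (y - S) :=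
    (continuous_gauss σ).comp (continuous_sub_right S)
  refine setIntegral_lt_setIntegral_of_forall_weighted_sub_le
    (continuous_shift S0) (integrable_gauss_sub hσ.le S0) (fun y => (gauss_pos hσ _).le)
    (continuous_shift S1) (integrable_gauss_sub hσ.le S1)
    ((integral_gauss_sub hσ S0).trans (integral_gauss_sub hσ S1).symm) weight1_pos.le
    (exists_mul_gauss_sub_lt_mul_gauss_sub hσ hS weight0_pos weight1_pos)
    (exists_mul_gauss_sub_lt_mul_gauss_sub hσ hS.symm weight1_pos weight0_pos) fun Δ hΔ => ?_
  have h_le := h_opt Δ hΔ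
  rwa [bayesRisk_eq_sub hσ hΓ, bayesRisk_eq_sub hσ hΔ, sub_le_sub_iff_left] at h_le

end BayesRisk

theorem stmt_16_general {σ π0t π0r C00t C01t C10t C11t C00r C01r C10r C11r : ℝ}
    {A0 A1 : Set ℝ} (hσ : 0 < σ) (hA : A0 ⊆ A1) (hπt : π0t < 1) (hπr : π0r ∈ Set.Ioo (0 : ℝ) 1)
    (hr0 : C00r < C10r) (hr1 : C11r < C01r) (ht1 : C01t < C11t) :
    ¬ ∃ (S0s S1s : ℝ) (Γ1s : Set ℝ), MeasurableSet Γ1s ∧ S0s ∈ A0 ∧ S1s ∈ A1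
        ∧ (∀ S0 S1 : ℝ, S0 ∈ A0 → S1 ∈ A1 →
            bayesRisk σ S0s S1s π0t C00t C01t C10t C11t Γ1s
              ≤ bayesRisk σ S0 S1 π0t C00t C01t C10t C11t Γ1s)
        ∧ (∀ Γ1 : Set ℝ, MeasurableSet Γ1 →
            bayesRisk σ S0s S1s π0r C00r C01r C10r C11r Γ1s
              ≤ bayesRisk σ S0s S1s π0r C00r C01r C10r C11r Γ1)
        ∧ S0s ≠ S1s := by
  rintro ⟨S0, S1, Γ, hΓ, hS0, -, h_transmitter, h_receiver, hS⟩
  have h_le : ∫ y in Γ, gauss σ (y - S1) ≤ ∫ y in Γ, gauss σ (y - S0) :=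
    setIntegral_gauss_sub_le_of_bayesRisk_le hσ hπt ht1 hΓ (h_transmitter S0 S0 hS0 (hA hS0))
  have h_lt : ∫ y in Γ, gauss σ (y - S0) < ∫ y in Γ, gauss σ (y - S1) :=
    setIntegral_gauss_sub_lt_of_forall_bayesRisk_le hσ hπr hr0 hr1 hS hΓ h_receiver
  exact h_lt.not_ge h_le

/-- When `ξ₀ > 0`, `ξ₁ < 0` (`C₁₀ᵗ > C₀₀ᵗ`, `C₀₁ᵗ < C₁₁ᵗ` while the receiver costs
satisfy `C₁₀ʳ > C₀₀ʳ`, `C₀₁ʳ > C₁₁ʳ`) and `P₀ < P₁`, the binary Gaussian signaling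
game has no informative Nash equilibrium. -/
theorem stmt_16 (σ P0 P1 π0t π0r C00t C01t C10t C11t C00r C01r C10r C11r : ℝ)
    (hσ : 0 < σ) (hP0 : 0 < P0) (hP01 : P0 < P1)
    (hπt : π0t ∈ Set.Ioo (0 : ℝ) 1) (hπr : π0r ∈ Set.Ioo (0 : ℝ) 1)
    (hr10 : C10r > C00r) (hr01 : C01r > C11r)
    (ht10 : C10t > C00t) (ht01 : C01t < C11t) :
    ¬ ∃ (S0s S1s : ℝ) (Γ1s : Set ℝ), MeasurableSet Γ1s
        ∧ S0s ^ 2 ≤ P0 ∧ S1s ^ 2 ≤ P1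
        ∧ (∀ S0 S1 : ℝ, S0 ^ 2 ≤ P0 → S1 ^ 2 ≤ P1 →
            bayesRisk σ S0s S1s π0t C00t C01t C10t C11t Γ1s
              ≤ bayesRisk σ S0 S1 π0t C00t C01t C10t C11t Γ1s)
        ∧ (∀ Γ1 : Set ℝ, MeasurableSet Γ1 →
            bayesRisk σ S0s S1s π0r C00r C01r C10r C11r Γ1s
              ≤ bayesRisk σ S0s S1s π0r C00r C01r C10r C11r Γ1)
        ∧ S0s ≠ S1s := by
  exact stmt_16_general (A0 := {S | S ^ 2 ≤ P0}) (A1 := {S | S ^ 2 ≤ P1}) hσ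
    (fun _ hS => hS.trans hP01.le) hπt.2 hπr hr10 hr01 ht01
end
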